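/- arXiv:2301.11056 — 3 statements merged into one kernel-verified Lean document; each statement's English description precedes it below -/
import Mathlib

section
/- There exists a constant C ≥ 0 such that for every n ≥ 1, every full-rank lattice L in ℝⁿ contains a nonzero vector x with ‖x‖₁ ≤ (n/3.659 + C·log(n+1))·det(L)^{1/n}. -/
open MeasureTheory Filter Topology Set

noncomputable def rkY (x : ℝ) : ℝ := -Real.log (Real.sigmoid x) - Real.log (1 - Real.sigmoid x)

lemma rk_q_pos (x : ℝ) : 0 < 1 - Real.sigmoid x := by linarith [Real.sigmoid_lt_one x]

lemma rk_log_sub (x : ℝ) : Real.log (Real.sigmoid x) - Real.log (1 - Real.sigmoid x) = x := by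
  rw [← Real.sigmoid_neg, ← Real.sigmoid_mul_rexp_neg,
    Real.log_mul (Real.sigmoid_pos x).ne' (Real.exp_pos _).ne', Real.log_exp]; ring

lemma rk_neg_log_p_nonneg (x : ℝ) : 0 ≤ -Real.log (Real.sigmoid x) := by
  have := Real.log_nonpos (Real.sigmoid_nonneg x) (Real.sigmoid_le_one x); linarith

lemma rk_neg_log_q_nonneg (x : ℝ) : 0 ≤ -Real.log (1 - Real.sigmoid x) := by
  have := Real.log_nonpos (rk_q_pos x).le (by linarith [Real.sigmoid_pos x]); linarith

lemma rkY_nonneg (x : ℝ) : 0 ≤ rkY x := by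
  have := rk_neg_log_p_nonneg x
  have := rk_neg_log_q_nonneg x
  unfold rkY; linarith

lemma rkY_cont : Continuous rkY := by
  unfold rkY
  refine (Continuous.log continuous_sigmoid fun x => (Real.sigmoid_pos x).ne').neg.sub
    (Continuous.log (continuous_const.sub continuous_sigmoid) fun x => (rk_q_pos x).ne')

lemma rk_exp_negY (x : ℝ) : Real.exp (-rkY x) = Real.sigmoid x * (1 - Real.sigmoid x) := by
  unfold rkY
  rw [neg_sub, sub_neg_eq_add, Real.exp_add, Real.exp_log (Real.sigmoid_pos x),
    Real.exp_log (rk_q_pos x), mul_comm]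

lemma rk_deriv_logp (x : ℝ) : HasDerivAt (fun x => Real.log (Real.sigmoid x))
    (1 - Real.sigmoid x) x := by
  convert! (Real.hasDerivAt_sigmoid x).log (Real.sigmoid_pos x).ne' using 1
  field_simp [(Real.sigmoid_pos x).ne']

lemma rk_deriv_logq (x : ℝ) : HasDerivAt (fun x => Real.log (1 - Real.sigmoid x))
    (-Real.sigmoid x) x := by
  convert! ((Real.hasDerivAt_sigmoid x).const_sub 1).log (rk_q_pos x).ne' using 1
  have := (rk_q_pos x).ne'
  field_simp

lemma rk_integrableOn_Iic {g g' : ℝ → ℝ} (hd : ∀ x, HasDerivAt g (g' x) x) (hc : Continuous g')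
    (hn : ∀ x, 0 ≤ g' x) {B : ℝ} (hB : ∀ x, -B ≤ g x) (a : ℝ) : IntegrableOn g' (Iic a) := by
  refine integrableOn_Iic_of_intervalIntegral_norm_bounded (l := atTop) (a := fun x : ℝ => -x)
    (g a + B) a (fun i => ?_) tendsto_neg_atTop_atBot (Eventually.of_forall fun i => ?_)
  · exact (hc.integrableOn_Icc).mono_set Ioc_subset_Icc_self
  · simp_rw [Real.norm_of_nonneg (hn _)]
    rw [intervalIntegral.integral_eq_sub_of_hasDerivAt (fun x _ => hd x) (hc.intervalIntegrable _ _)]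
    linarith [hB (-i)]

lemma rk_integrable {g g' : ℝ → ℝ} (hd : ∀ x, HasDerivAt g (g' x) x) (hc : Continuous g')
    (hn : ∀ x, 0 ≤ g' x) {B : ℝ} (hB : ∀ x, |g x| ≤ B) : Integrable g' := by
  refine integrable_of_intervalIntegral_norm_bounded (l := atTop) (a := fun x : ℝ => -x)
    (b := fun x => x)
    (2 * B) (fun i => ?_) tendsto_neg_atTop_atBot tendsto_id (Eventually.of_forall fun i => ?_)
  · exact (hc.integrableOn_Icc).mono_set Ioc_subset_Icc_self
  · simp_rw [Real.norm_of_nonneg (hn _)]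
    rw [intervalIntegral.integral_eq_sub_of_hasDerivAt (fun x _ => hd x) (hc.intervalIntegrable _ _)]
    linarith [abs_le.1 (hB (-i)), abs_le.1 (hB i)]

noncomputable def rkK (a t : ℝ) : ℝ := (if a < t then 1 else 0) - Real.sigmoid t

lemma rk_tend_logq : Tendsto (fun x => Real.log (1 - Real.sigmoid x)) atBot (𝓝 0) := by
  have : Tendsto (fun x => 1 - Real.sigmoid x) atBot (𝓝 1) := by
    simpa using tendsto_const_nhds.sub Real.tendsto_sigmoid_atBot
  simpa using this.log one_ne_zero

lemma rk_tend_logp : Tendsto (fun x => Real.log (Real.sigmoid x)) atTop (𝓝 0) := by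
  simpa using Real.tendsto_sigmoid_atTop.log one_ne_zero

lemma rk_left (a : ℝ) : IntegrableOn (fun t => Real.sigmoid t ^ 2) (Iic a) ∧
    ∫ t in Iic a, Real.sigmoid t ^ 2 = -Real.log (1 - Real.sigmoid a) - Real.sigmoid a := by
  have hd : ∀ x, HasDerivAt (fun x => -Real.log (1 - Real.sigmoid x) - Real.sigmoid x)
      (Real.sigmoid x ^ 2) x := fun x => by
    convert! (rk_deriv_logq x).neg.sub (Real.hasDerivAt_sigmoid x) using 1
    ring
  have hi : IntegrableOn (fun t => Real.sigmoid t ^ 2) (Iic a) :=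
    rk_integrableOn_Iic hd (continuous_sigmoid.pow 2) (fun x => sq_nonneg _) (B := 1)
      (fun x => by linarith [rk_neg_log_q_nonneg x, Real.sigmoid_le_one x]) a
  refine ⟨hi, ?_⟩
  rw [integral_Iic_of_hasDerivAt_of_tendsto' (fun x _ => hd x) hi (m := 0), sub_zero]
  simpa using rk_tend_logq.neg.sub Real.tendsto_sigmoid_atBot

lemma rk_right (a : ℝ) : IntegrableOn (fun t => (1 - Real.sigmoid t) ^ 2) (Ioi a) ∧
    ∫ t in Ioi a, (1 - Real.sigmoid t) ^ 2 = -Real.log (Real.sigmoid a) - (1 - Real.sigmoid a) := by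
  have hd : ∀ x, HasDerivAt (fun x => Real.log (Real.sigmoid x) - Real.sigmoid x)
      ((1 - Real.sigmoid x) ^ 2) x := fun x => by
    convert! (rk_deriv_logp x).sub (Real.hasDerivAt_sigmoid x) using 1
    ring
  have ht : Tendsto (fun x => Real.log (Real.sigmoid x) - Real.sigmoid x) atTop (𝓝 (0 - 1)) :=
    rk_tend_logp.sub Real.tendsto_sigmoid_atTop
  have hi := integrableOn_Ioi_deriv_of_nonneg' (a := a) (fun x _ => hd x)
    (fun x _ => sq_nonneg _) ht
  refine ⟨hi, ?_⟩
  rw [integral_Ioi_of_hasDerivAt_of_tendsto' (fun x _ => hd x) hi ht]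
  ring

lemma rk_mid {a b : ℝ} (hab : a ≤ b) :
    IntegrableOn (fun t => -((1 - Real.sigmoid t) * Real.sigmoid t)) (Ioc a b) ∧
    ∫ t in Ioc a b, -((1 - Real.sigmoid t) * Real.sigmoid t) = Real.sigmoid a - Real.sigmoid b := by
  have hc : Continuous (fun t => -((1 - Real.sigmoid t) * Real.sigmoid t)) :=
    ((continuous_const.sub continuous_sigmoid).mul continuous_sigmoid).neg
  refine ⟨hc.integrableOn_Icc.mono_set Ioc_subset_Icc_self, ?_⟩
  rw [← intervalIntegral.integral_of_le hab,
    intervalIntegral.integral_eq_sub_of_hasDerivAt (f := fun x => -Real.sigmoid x) (fun x _ => ?_)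
      (hc.intervalIntegrable _ _)]
  · ring
  · convert! (Real.hasDerivAt_sigmoid x).neg using 1
    ring

lemma rk_kernel_le {a b : ℝ} (hab : a ≤ b) : Integrable (fun t => rkK a t * rkK b t) ∧
    ∫ t, rkK a t * rkK b t = (rkY a + rkY b - 2 - |a - b|) / 2 := by
  have e1 : EqOn (fun t => Real.sigmoid t ^ 2) (fun t => rkK a t * rkK b t) (Iic a) := by
    intro t ht
    have h1 : ¬ a < t := not_lt.2 ht
    have h2 : ¬ b < t := not_lt.2 (le_trans ht hab)
    simp only [rkK, if_neg h1, if_neg h2]; ring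
  have e2 : EqOn (fun t => -((1 - Real.sigmoid t) * Real.sigmoid t))
      (fun t => rkK a t * rkK b t) (Ioc a b) := by
    intro t ht
    have h2 : ¬ b < t := not_lt.2 ht.2
    simp only [rkK, if_pos ht.1, if_neg h2]; ring
  have e3 : EqOn (fun t => (1 - Real.sigmoid t) ^ 2)
      (fun t => rkK a t * rkK b t) (Ioi b) := by
    intro t ht
    have h2 : b < t := ht
    have h1 : a < t := lt_of_le_of_lt hab h2
    simp only [rkK, if_pos h1, if_pos h2]; ring
  have i1 := (rk_left a).1.congr_fun e1 measurableSet_Iic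
  have i2 := (rk_mid hab).1.congr_fun e2 measurableSet_Ioc
  have i3 := (rk_right b).1.congr_fun e3 measurableSet_Ioi
  have i12 : IntegrableOn (fun t => rkK a t * rkK b t) (Iic b) := by
    rw [← Iic_union_Ioc_eq_Iic hab]; exact i1.union i2
  constructor
  · rw [← integrableOn_univ, ← Iic_union_Ioi (a := b)]; exact i12.union i3
  · rw [← setIntegral_univ, ← Iic_union_Ioi (a := b),
      setIntegral_union (Iic_disjoint_Ioi le_rfl) measurableSet_Ioi i12 i3,
      ← Iic_union_Ioc_eq_Iic hab, setIntegral_union (Iic_disjoint_Ioc le_rfl) measurableSet_Ioc i1 i2,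
      ← setIntegral_congr_fun measurableSet_Iic e1, ← setIntegral_congr_fun measurableSet_Ioc e2,
      ← setIntegral_congr_fun measurableSet_Ioi e3, (rk_left a).2, (rk_mid hab).2, (rk_right b).2,
      abs_of_nonpos (by linarith)]
    unfold rkY
    linarith [rk_log_sub a, rk_log_sub b]

lemma rk_kernel (a b : ℝ) : Integrable (fun t => rkK a t * rkK b t) ∧
    ∫ t, rkK a t * rkK b t = (rkY a + rkY b - 2 - |a - b|) / 2 := by
  rcases le_total a b with h | h
  · exact rk_kernel_le h
  · have := rk_kernel_le h
    simp_rw [mul_comm (rkK b _)] at this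
    rw [abs_sub_comm, add_comm (rkY a)]; exact this

lemma rk_sum_abs {ι : Type*} (T : Finset ι) (a : ι → ℝ) :
    ∑ i ∈ T, ∑ j ∈ T, |a i - a j| ≤ 2 * T.card * ∑ i ∈ T, (rkY (a i) - 1) := by
  have h0 : 0 ≤ ∫ t, (∑ i ∈ T, rkK (a i) t) * (∑ j ∈ T, rkK (a j) t) :=
    integral_nonneg fun t => mul_self_nonneg _
  simp_rw [Finset.sum_mul_sum] at h0
  rw [integral_finsetSum _ fun i _ => integrable_finsetSum _ fun j _ => (rk_kernel (a i) (a j)).1] at h0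
  simp_rw [integral_finsetSum T fun j _ => (rk_kernel (a _) (a j)).1, (rk_kernel _ _).2] at h0
  have : ∑ i ∈ T, ∑ j ∈ T, (rkY (a i) + rkY (a j) - 2 - |a i - a j|) / 2
     = T.card * ∑ i ∈ T, (rkY (a i) - 1) - (∑ i ∈ T, ∑ j ∈ T, |a i - a j|) / 2 := by
    simp only [← Finset.sum_div, Finset.sum_sub_distrib, Finset.sum_add_distrib, Finset.sum_const,
      nsmul_eq_mul, ← Finset.mul_sum]
    ring
  rw [this] at h0
  linarith
open ProbabilityTheory

lemma rk_int_sqrt : Integrable (fun x => Real.exp (-rkY x / 2)) := by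
  have key : ∀ x, Real.exp (-rkY x / 2) = Real.exp (x / 2) / (1 + Real.exp (x / 2) ^ 2) := by
    intro x
    have h1 : Real.exp (-rkY x / 2) ^ 2 = (Real.exp (x / 2) / (1 + Real.exp (x / 2) ^ 2)) ^ 2 := by
      rw [← Real.exp_nat_mul]
      have : ((2 : ℕ) : ℝ) * (-rkY x / 2) = -rkY x := by push_cast; ring
      rw [this, rk_exp_negY]
      have h2 : Real.exp (-x) = (Real.exp (x / 2) ^ 2)⁻¹ := by
        rw [← Real.exp_nat_mul, ← Real.exp_neg]; congr 1; push_cast; ring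
      rw [Real.sigmoid_def, h2]
      have := Real.exp_pos (x / 2)
      field_simp
      ring
    exact (pow_left_inj₀ (Real.exp_pos _).le (by positivity) two_ne_zero).1 h1
  simp_rw [key]
  refine rk_integrable (g := fun x => Real.arctan (Real.exp (x / 2)) * 2) (B := Real.pi)
    (fun x => ?_) ?_ (fun x => by positivity) (fun x => ?_)
  · convert! (((hasDerivAt_id x).div_const 2).exp.arctan).mul_const 2 using 1
    simp
    field_simp
  · refine Continuous.div (by fun_prop) (by fun_prop) fun x => by positivity
  · rw [abs_le]
    have := Real.arctan_lt_pi_div_two (Real.exp (x/2))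
    have := Real.neg_pi_div_two_lt_arctan (Real.exp (x/2))
    constructor <;> linarith

noncomputable def rkD (x : ℝ) : ENNReal := ENNReal.ofReal (Real.exp (-rkY x))

lemma rkD_meas : Measurable rkD := by
  unfold rkD
  exact (Real.continuous_exp.comp rkY_cont.neg).measurable.ennreal_ofReal

noncomputable def rkNu : Measure ℝ := volume.withDensity rkD

lemma rk_int_f : Integrable (fun x => Real.exp (-rkY x)) ∧ ∫ x, Real.exp (-rkY x) = 1 := by
  simp_rw [rk_exp_negY]
  have hi : Integrable (fun x => Real.sigmoid x * (1 - Real.sigmoid x)) := by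
    refine rk_integrable Real.hasDerivAt_sigmoid
      (continuous_sigmoid.mul (continuous_const.sub continuous_sigmoid))
      (fun x => mul_nonneg (Real.sigmoid_nonneg x) (rk_q_pos x).le) (B := 1)
      (fun x => ?_)
    rw [abs_of_nonneg (Real.sigmoid_nonneg x)]; exact Real.sigmoid_le_one x
  refine ⟨hi, ?_⟩
  rw [integral_of_hasDerivAt_of_tendsto Real.hasDerivAt_sigmoid hi
    Real.tendsto_sigmoid_atBot Real.tendsto_sigmoid_atTop, sub_zero]

instance rkNu_prob : IsProbabilityMeasure rkNu := by
  constructor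
  rw [rkNu, withDensity_apply _ MeasurableSet.univ, Measure.restrict_univ]
  unfold rkD
  rw [← ofReal_integral_eq_lintegral_ofReal rk_int_f.1
    (Eventually.of_forall fun x => (Real.exp_pos _).le), rk_int_f.2, ENNReal.ofReal_one]

lemma rkY_memLp : MemLp rkY 2 rkNu := by
  rw [memLp_two_iff_integrable_sq rkY_cont.aestronglyMeasurable, rkNu,
    integrable_withDensity_iff rkD_meas (Eventually.of_forall fun x => ENNReal.ofReal_lt_top)]
  simp_rw [rkD, ENNReal.toReal_ofReal (Real.exp_pos _).le]
  refine (rk_int_sqrt.const_mul 8).mono' ?_ (Eventually.of_forall fun x => ?_)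
  · exact ((rkY_cont.pow 2).mul (Real.continuous_exp.comp rkY_cont.neg)).aestronglyMeasurable
  · rw [Real.norm_of_nonneg (by positivity)]
    have h := Real.quadratic_le_exp_of_nonneg (x := rkY x / 2) (by linarith [rkY_nonneg x])
    have h2 : Real.exp (-rkY x / 2) = Real.exp (rkY x / 2) * Real.exp (-rkY x) := by
      rw [← Real.exp_add]; congr 1; ring
    rw [h2, ← mul_assoc]
    refine mul_le_mul_of_nonneg_right ?_ (Real.exp_pos _).le
    nlinarith [rkY_nonneg x]

lemma rkY_mean : ∫ x, rkY x ∂rkNu = 2 := by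
  have hi : Integrable rkY rkNu := rkY_memLp.integrable (by norm_num)
  rw [rkNu, integrable_withDensity_iff rkD_meas
    (Eventually.of_forall fun x => ENNReal.ofReal_lt_top)] at hi
  rw [rkNu, integral_withDensity_eq_integral_toReal_smul rkD_meas
    (Eventually.of_forall fun x => ENNReal.ofReal_lt_top)]
  simp_rw [smul_eq_mul, mul_comm _ (rkY _)]
  simp_rw [rkD, ENNReal.toReal_ofReal (Real.exp_pos _).le] at hi ⊢
  have hb : Tendsto (fun x => Real.negMulLog (Real.sigmoid x) - Real.negMulLog (1 - Real.sigmoid x)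
      + 2 * Real.sigmoid x) atBot (𝓝 0) := by
    have h1 := (Real.continuous_negMulLog.tendsto 0).comp Real.tendsto_sigmoid_atBot
    have h2 := (Real.continuous_negMulLog.tendsto (1 - 0)).comp
      (tendsto_const_nhds.sub Real.tendsto_sigmoid_atBot)
    have := (h1.sub h2).add (Real.tendsto_sigmoid_atBot.const_mul 2)
    simpa using this
  have ht : Tendsto (fun x => Real.negMulLog (Real.sigmoid x) - Real.negMulLog (1 - Real.sigmoid x)
      + 2 * Real.sigmoid x) atTop (𝓝 2) := by
    have h1 := (Real.continuous_negMulLog.tendsto 1).comp Real.tendsto_sigmoid_atTop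
    have h2 := (Real.continuous_negMulLog.tendsto (1 - 1)).comp
      (tendsto_const_nhds.sub Real.tendsto_sigmoid_atTop)
    have := (h1.sub h2).add (Real.tendsto_sigmoid_atTop.const_mul 2)
    simpa using this
  rw [integral_of_hasDerivAt_of_tendsto (fun x => ?_) hi hb ht, sub_zero]
  have h1 := (Real.hasDerivAt_negMulLog (Real.sigmoid_pos x).ne').comp x (Real.hasDerivAt_sigmoid x)
  have h2 := (Real.hasDerivAt_negMulLog (rk_q_pos x).ne').comp x
    ((Real.hasDerivAt_sigmoid x).const_sub 1)
  convert! (h1.sub h2).add ((Real.hasDerivAt_sigmoid x).const_mul 2) using 1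
  rw [rk_exp_negY]; unfold rkY; ring

lemma rk_pi_eq (n : ℕ) : Measure.pi (fun _ : Fin n => rkNu) =
    (volume : Measure (Fin n → ℝ)).withDensity
      (fun x => ENNReal.ofReal (Real.exp (-∑ i, rkY (x i)))) := by
  refine Measure.pi_eq fun s hs => ?_
  rw [withDensity_apply _ (MeasurableSet.univ_pi hs), volume_pi, Measure.restrict_pi_pi]
  have e : ∀ x : Fin n → ℝ, Real.exp (-∑ i, rkY (x i)) = ∏ i, Real.exp (-rkY (x i)) := by
    intro x; rw [← Finset.sum_neg_distrib, Real.exp_sum]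
  simp_rw [e]
  rw [← ofReal_integral_eq_lintegral_ofReal
    (Integrable.fintype_prod_dep (f := fun _ y => Real.exp (-rkY y)) fun i => rk_int_f.1.integrableOn)
    (Eventually.of_forall fun x => Finset.prod_nonneg fun i _ => (Real.exp_pos _).le),
    integral_fintype_prod_eq_prod (fun _ y => Real.exp (-rkY y)),
    ENNReal.ofReal_prod_of_nonneg fun i _ => integral_nonneg fun x => (Real.exp_pos _).le]
  refine Finset.prod_congr rfl fun i _ => ?_
  rw [rkNu, withDensity_apply _ (hs i), ofReal_integral_eq_lintegral_ofReal rk_int_f.1.integrableOn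
    (Eventually.of_forall fun x => (Real.exp_pos _).le)]
  rfl

/-- volume lower bound -/
lemma rk_vol (ε : ℝ) (hε : 0 < ε) : ∃ N : ℕ, ∀ n : ℕ, N ≤ n →
    ENNReal.ofReal (Real.exp (n * (2 - ε)) / 2) ≤
      volume {x : Fin n → ℝ | ∑ i, rkY (x i) ≤ n * (2 + ε)} := by
  obtain ⟨N, hN⟩ := exists_nat_ge (2 * Var[rkY; rkNu] / ε ^ 2)
  refine ⟨N + 1, fun n hn => ?_⟩
  have hn0 : (0 : ℝ) < n := by exact_mod_cast (by omega : 0 < n)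
  have hNn : 2 * Var[rkY; rkNu] / ε ^ 2 ≤ n := hN.trans (by exact_mod_cast (by omega : N ≤ n))
  set P := Measure.pi (fun _ : Fin n => rkNu) with hP
  set X : (Fin n → ℝ) → ℝ := ∑ i, fun ω => rkY (ω i) with hX
  have hXa : ∀ ω, X ω = ∑ i, rkY (ω i) := fun ω => by simp [hX]
  have hm : ∀ i : Fin n, MemLp (fun ω : Fin n → ℝ => rkY (ω i)) 2 P := fun i =>
    rkY_memLp.comp_measurePreserving (measurePreserving_eval _ i)
  have hXm : MemLp X 2 P := memLp_finsetSum' _ fun i _ => hm i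
  have hvar : Var[X; P] = n * Var[rkY; rkNu] := by
    rw [hX, hP, variance_sum_pi (X := fun _ => rkY) fun i => rkY_memLp]; simp
  have hmean : ∫ ω, X ω ∂P = (n : ℝ) * 2 := by
    simp_rw [hXa]
    rw [integral_finsetSum _ fun i _ => (hm i).integrable (by norm_num)]
    have : ∀ i : Fin n, ∫ ω : Fin n → ℝ, rkY (ω i) ∂P = 2 := fun i => by
      rw [hP, integral_comp_eval (μ := fun _ : Fin n => rkNu) (f := rkY)
        rkY_cont.aestronglyMeasurable, rkY_mean]
    simp [this]
  have hch := meas_ge_le_variance_div_sq hXm (c := n * ε) (by positivity)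
  rw [hvar, hmean] at hch
  have hle : (n * Var[rkY; rkNu]) / (n * ε) ^ 2 ≤ 1 / 2 := by
    rw [div_le_iff₀ (by positivity)] at hNn ⊢
    nlinarith
  have hXc : Continuous X := by
    have : X = fun ω => ∑ i, rkY (ω i) := funext hXa
    rw [this]
    exact continuous_finsetSum _ fun i _ => rkY_cont.comp (continuous_apply i)
  set S := {ω | n * ε ≤ |X ω - n * 2|} with hS
  have hSm : MeasurableSet S := by
    refine (isClosed_le continuous_const ((hXc.sub continuous_const).abs)).measurableSet
  have h1 : P S ≤ ENNReal.ofReal (1 / 2) := hch.trans (ENNReal.ofReal_le_ofReal hle)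
  have h2 : ENNReal.ofReal (1 / 2) ≤ P Sᶜ := by
    rw [prob_compl_eq_one_sub hSm]
    refine le_trans ?_ (tsub_le_tsub_left h1 1)
    rw [← ENNReal.ofReal_one, ← ENNReal.ofReal_sub _ (by norm_num)]
    norm_num
  have h3 : P Sᶜ ≤ ENNReal.ofReal (Real.exp (-(n * (2 - ε)))) * volume Sᶜ := by
    rw [hP, rk_pi_eq, withDensity_apply _ hSm.compl, ← setLIntegral_const]
    refine setLIntegral_mono measurable_const fun x hx => ?_
    refine ENNReal.ofReal_le_ofReal (Real.exp_le_exp.2 ?_)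
    simp only [hS, mem_compl_iff, mem_ofPred_eq, not_le, hXa, abs_lt] at hx
    nlinarith [hx.1]
  have h4 : Sᶜ ⊆ {x : Fin n → ℝ | ∑ i, rkY (x i) ≤ n * (2 + ε)} := by
    intro x hx
    simp only [hS, mem_compl_iff, mem_ofPred_eq, not_le, hXa, abs_lt] at hx ⊢
    nlinarith [hx.2]
  refine le_trans ?_ (measure_mono h4)
  have h5 := mul_le_mul_right (h2.trans h3) (ENNReal.ofReal (Real.exp (n * (2 - ε))))
  rw [← mul_assoc, ← ENNReal.ofReal_mul (Real.exp_pos _).le, ← ENNReal.ofReal_mul (Real.exp_pos _).le,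
    ← Real.exp_add, add_neg_cancel, Real.exp_zero, ENNReal.ofReal_one, one_mul] at h5
  convert! h5 using 2
  ring

lemma rk_blichfeldt {n : ℕ} (b : Module.Basis (Fin n) ℝ (Fin n → ℝ)) (R : Set (Fin n → ℝ))
    (hR : MeasurableSet R) (M : ℕ)
    (h : ∀ z : Fin n → ℝ, ∀ T : Finset (Submodule.span ℤ (Set.range b)),
      (∀ v ∈ T, (v : Fin n → ℝ) + z ∈ R) → T.card ≤ M) :
    volume R ≤ M * ENNReal.ofReal |(Matrix.of b).det| := by
  classical
  have fund := ZSpan.isAddFundamentalDomain b (volume : Measure (Fin n → ℝ))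
  have hct : Countable (Submodule.span ℤ (Set.range b)) := inferInstance
  have e1 : volume R = ∫⁻ x, R.indicator 1 x := by rw [lintegral_indicator_one hR]
  have hinv : VAddInvariantMeasure (Submodule.span ℤ (Set.range b)) (Fin n → ℝ) volume :=
    inferInstanceAs <| VAddInvariantMeasure (Submodule.span ℤ (Set.range b)).toAddSubgroup _ volume
  rw [e1, fund.lintegral_eq_tsum'', ← lintegral_tsum, ← ZSpan.volume_fundamentalDomain,
    ← setLIntegral_const]
  · refine setLIntegral_mono measurable_const fun z _ => ?_
    rw [ENNReal.tsum_eq_iSup_sum]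
    refine iSup_le fun T => ?_
    have := h z (T.filter fun v : Submodule.span ℤ (Set.range b) => (v : Fin n → ℝ) + z ∈ R) fun v hv => (Finset.mem_filter.1 hv).2
    have e : ∑ v ∈ T, R.indicator (1 : (Fin n → ℝ) → ENNReal) (v +ᵥ z)
        = ((T.filter fun v : Submodule.span ℤ (Set.range b) => (v : Fin n → ℝ) + z ∈ R).card : ENNReal) := by
      rw [Finset.card_filter]
      push_cast
      refine Finset.sum_congr rfl fun v _ => ?_
      rw [Set.indicator_apply]; rfl
    rw [e]; exact_mod_cast this
  · intro v
    refine Measurable.aemeasurable ?_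
    have : Measurable fun x : Fin n → ℝ => (v : Fin n → ℝ) + x := measurable_const_add _
    exact (measurable_one.indicator hR).comp this

lemma rk_pack {n : ℕ} (hn : 1 ≤ n) (L : Submodule ℤ (Fin n → ℝ)) (s : ℝ) (hs : 0 < s)
    (hL : ∀ x ∈ L, x ≠ 0 → s * (2 * n * (1 + 2 * (1 / 1000))) ≤ ∑ i, |x i|)
    (z : Fin n → ℝ) (T : Finset L)
    (hT : ∀ v ∈ T, (v : Fin n → ℝ) + z ∈
      {x : Fin n → ℝ | ∑ i, rkY (s⁻¹ * x i) ≤ n * (2 + 1 / 1000)}) : T.card ≤ 1002 := by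
  classical
  rcases T.eq_empty_or_nonempty with rfl | hne
  · simp
  have hn0 : (0 : ℝ) < n := by exact_mod_cast hn
  have hm : (0 : ℝ) < T.card := by exact_mod_cast hne.card_pos
  set lam : ℝ := 2 * n * (1 + 2 * (1 / 1000)) with hlam
  have hlam0 : 0 < lam := by positivity
  -- upper bound
  have h1 : ∑ k, ∑ v ∈ T, ∑ w ∈ T, |s⁻¹ * ((v : Fin n → ℝ) + z) k - s⁻¹ * ((w : Fin n → ℝ) + z) k|
      ≤ ∑ k, 2 * T.card * ∑ v ∈ T, (rkY (s⁻¹ * ((v : Fin n → ℝ) + z) k) - 1) :=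
    Finset.sum_le_sum fun k _ => rk_sum_abs T fun v => s⁻¹ * ((v : Fin n → ℝ) + z) k
  have h2 : ∑ k, 2 * T.card * ∑ v ∈ T, (rkY (s⁻¹ * ((v : Fin n → ℝ) + z) k) - 1)
      ≤ 2 * T.card * (T.card * (n * (1 + 1 / 1000))) := by
    rw [← Finset.mul_sum, Finset.sum_comm]
    refine mul_le_mul_of_nonneg_left ?_ (by positivity)
    rw [← nsmul_eq_mul]
    refine Finset.sum_le_card_nsmul _ _ _ fun v hv => ?_
    have := hT v hv
    simp only [mem_ofPred_eq] at this
    rw [Finset.sum_sub_distrib]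
    simp only [Finset.sum_const, Finset.card_univ, Fintype.card_fin, nsmul_eq_mul, mul_one]
    linarith
  have h3 : (T.card : ℝ) * ((T.card - 1) * lam) ≤
      ∑ k, ∑ v ∈ T, ∑ w ∈ T, |s⁻¹ * ((v : Fin n → ℝ) + z) k - s⁻¹ * ((w : Fin n → ℝ) + z) k| := by
    rw [Finset.sum_comm]
    rw [← nsmul_eq_mul]
    refine Finset.card_nsmul_le_sum _ _ _ fun v hv => ?_
    rw [Finset.sum_comm, ← Finset.add_sum_erase T _ hv]
    have hc : ((T.erase v).card : ℝ) = T.card - 1 := by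
      rw [Finset.card_erase_of_mem hv, Nat.cast_sub hne.card_pos]; simp
    rw [← hc, ← nsmul_eq_mul]
    refine le_add_of_nonneg_of_le (Finset.sum_nonneg fun i _ => abs_nonneg _) ?_
    refine Finset.card_nsmul_le_sum _ _ _ fun w hw => ?_
    have hvw : v - w ≠ 0 := sub_ne_zero.2 (Finset.ne_of_mem_erase hw).symm
    have := hL ((v - w : L) : Fin n → ℝ) (v - w).2 (fun h0 => hvw (Subtype.ext h0))
    have e : ∀ i, |s⁻¹ * ((v : Fin n → ℝ) + z) i - s⁻¹ * ((w : Fin n → ℝ) + z) i|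
        = s⁻¹ * |((v - w : L) : Fin n → ℝ) i| := by
      intro i
      rw [← mul_sub, abs_mul, abs_of_pos (inv_pos.2 hs)]
      simp
    simp_rw [e]
    rw [← Finset.mul_sum, inv_mul_eq_div, le_div_iff₀ hs]
    linarith
  have h4 := (h3.trans h1).trans h2
  have h5 : ((T.card : ℝ) - 1) * lam ≤ 2 * (T.card * (n * (1 + 1 / 1000))) := by
    refine le_of_mul_le_mul_left ?_ hm
    linarith
  have h6 : ((T.card : ℝ) - 1) * (1 + 2 * (1 / 1000)) ≤ T.card * (1 + 1 / 1000) := by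
    refine le_of_mul_le_mul_left ?_ (by positivity : (0:ℝ) < 2 * n)
    rw [hlam] at h5
    linarith
  have : (T.card : ℝ) ≤ 1002 := by linarith
  exact_mod_cast this

lemma rk_num : (1 : ℝ) < Real.exp (2 - 1 / 1000) / (7.318 * 1.002) := by
  rw [one_lt_div (by norm_num), sub_eq_add_neg, Real.exp_add]
  have h1 := Real.exp_one_gt_d9
  have h2 : Real.exp 2 = Real.exp 1 * Real.exp 1 := by rw [← Real.exp_add]; norm_num
  have h3 := Real.add_one_le_exp (-(1 / 1000 : ℝ))
  have h4 : (7.389 : ℝ) ≤ Real.exp 2 := by rw [h2]; nlinarith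
  nlinarith [Real.exp_pos (-(1 / 1000 : ℝ))]

lemma rk_small {n : ℕ} (hn : 1 ≤ n) (b : Module.Basis (Fin n) ℝ (Fin n → ℝ))
    (hd : (Matrix.of b).det ≠ 0) :
    ∃ x ∈ Submodule.span ℤ (Set.range b), x ≠ 0 ∧
      ∑ i, |x i| ≤ 2 * n * |(Matrix.of b).det| ^ ((1 : ℝ) / n) := by
  set d := |(Matrix.of b).det| ^ ((1 : ℝ) / n) with hdd
  have hd0 : 0 < |(Matrix.of b).det| := abs_pos.2 hd
  have hdpos : 0 < d := Real.rpow_pos_of_pos hd0 _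
  have hdn : d ^ n = |(Matrix.of b).det| := by
    rw [hdd, one_div, Real.rpow_inv_natCast_pow hd0.le (by omega)]
  set R : Set (Fin n → ℝ) := Set.pi univ fun _ => Ico 0 (2 * d) with hR
  have hRm : MeasurableSet R := MeasurableSet.univ_pi fun _ => measurableSet_Ico
  have hvol : volume R = ENNReal.ofReal ((2 * d) ^ n) := by
    rw [hR, volume_pi_pi]; simp [ENNReal.ofReal_pow hdpos.le, ENNReal.ofReal_mul, mul_pow]
  have hlt : ¬ volume R ≤ (1 : ℕ) * ENNReal.ofReal |(Matrix.of b).det| := by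
    rw [hvol, Nat.cast_one, one_mul, not_le, ENNReal.ofReal_lt_ofReal_iff (by positivity), mul_pow,
      hdn]
    have : (1 : ℝ) < 2 ^ n := one_lt_pow₀ (by norm_num) (by omega)
    nlinarith
  have := mt (rk_blichfeldt b R hRm 1) hlt
  push Not at this
  obtain ⟨z, T, hT, hc⟩ := this
  obtain ⟨v, hv, w, hw, hvw⟩ := Finset.one_lt_card.1 hc
  refine ⟨((v - w : Submodule.span ℤ (Set.range b)) : Fin n → ℝ), (v - w).2, ?_, ?_⟩
  · exact fun h0 => sub_ne_zero.2 hvw (Subtype.ext h0)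
  · have : ∀ i ∈ Finset.univ, |((v - w : Submodule.span ℤ (Set.range b)) : Fin n → ℝ) i| ≤ 2 * d := by
      intro i _
      have h1 := hT v hv i (mem_univ i)
      have h2 := hT w hw i (mem_univ i)
      simp only [mem_Ico, Pi.add_apply] at h1 h2
      simp only [Submodule.coe_sub, Pi.sub_apply]
      rw [abs_le]; constructor <;> linarith
    refine (Finset.sum_le_card_nsmul _ _ _ this).trans ?_
    simp; linarith

lemma rk_large : ∃ N : ℕ, ∀ n : ℕ, N ≤ n → 1 ≤ n → ∀ b : Module.Basis (Fin n) ℝ (Fin n → ℝ),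
    (Matrix.of b).det ≠ 0 →
    ∃ x ∈ Submodule.span ℤ (Set.range b), x ≠ 0 ∧
      ∑ i, |x i| ≤ n / 3.659 * |(Matrix.of b).det| ^ ((1 : ℝ) / n) := by
  obtain ⟨N1, hN1⟩ := rk_vol (1 / 1000) (by norm_num)
  obtain ⟨N2, hN2⟩ := eventually_atTop.1
    ((tendsto_pow_atTop_atTop_of_one_lt rk_num).eventually_gt_atTop 2004)
  refine ⟨max N1 N2, fun n hn hn1 b hd => ?_⟩
  by_contra! hcon
  have hvol := hN1 n (le_trans (le_max_left _ _) hn)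
  have hpow := hN2 n (le_trans (le_max_right _ _) hn)
  set d := |(Matrix.of b).det| ^ ((1 : ℝ) / n) with hdd
  have hd0 : 0 < |(Matrix.of b).det| := abs_pos.2 hd
  have hdpos : 0 < d := Real.rpow_pos_of_pos hd0 _
  have hdn : d ^ n = |(Matrix.of b).det| := by
    rw [hdd, one_div, Real.rpow_inv_natCast_pow hd0.le (by omega)]
  have hs : 0 < d / (7.318 * 1.002) := by positivity
  set s := d / (7.318 * 1.002) with hsd
  set R1 := {x : Fin n → ℝ | ∑ i, rkY (x i) ≤ n * (2 + 1 / 1000)} with hR1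
  have hY : Continuous fun x : Fin n → ℝ => ∑ i, rkY (x i) :=
    continuous_finsetSum _ fun i _ => rkY_cont.comp (continuous_apply i)
  have hR1m : MeasurableSet R1 := (isClosed_le hY continuous_const).measurableSet
  have hRm : MeasurableSet ((s⁻¹ • ·) ⁻¹' R1) := (measurable_const_smul s⁻¹) hR1m
  have hb := rk_blichfeldt b _ hRm 1002 fun z T hT =>
    rk_pack hn1 _ s hs (fun x hx hx0 => ?_) z T fun v hv => by simpa [hR1] using hT v hv
  · rw [Measure.addHaar_preimage_smul _ (inv_ne_zero hs.ne')] at hb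
    have h1 : abs (((s⁻¹) ^ Module.finrank ℝ (Fin n → ℝ))⁻¹) = s ^ n := by
      rw [Module.finrank_fin_fun, inv_pow, inv_inv, abs_of_pos (by positivity)]
    rw [h1] at hb
    have h2 := (mul_le_mul_right hvol (ENNReal.ofReal (s ^ n))).trans hb
    rw [← ENNReal.ofReal_mul (by positivity), ← ENNReal.ofReal_natCast,
      ← ENNReal.ofReal_mul (by positivity), ENNReal.ofReal_le_ofReal_iff (by positivity), hsd,
      Real.exp_nat_mul, div_pow, hdn] at h2
    rw [div_pow] at hpow
    have h3 : |(Matrix.of b).det| * (Real.exp (2 - 1 / 1000) ^ n / (7.318 * 1.002) ^ n)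
        ≤ |(Matrix.of b).det| * 2004 := by
      have e : |(Matrix.of b).det| * (Real.exp (2 - 1 / 1000) ^ n / (7.318 * 1.002) ^ n) =
        2 * (|(Matrix.of b).det| / (7.318 * 1.002) ^ n * (Real.exp (2 - 1 / 1000) ^ n / 2)) := by
        ring
      rw [e]; push_cast at h2; linarith
    have := le_of_mul_le_mul_left h3 hd0
    linarith
  · have := hcon x hx hx0
    refine le_trans (le_of_eq ?_) this.le
    rw [hsd]; field_simp; norm_num

/-- There is a constant `C ≥ 0` such that for every `n ≥ 1`, every full-rank
lattice in `ℝⁿ` (the ℤ-span of an ℝ-basis, given by the rows `b` of a matrix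
with nonzero determinant, whose covolume is `|det b|`) contains a nonzero
vector `x` with `‖x‖₁ ≤ (n/3.659 + C·log(n+1)) · det(L)^(1/n)`. -/
theorem rankin_linear_l1_bound :
    ∃ C : ℝ, 0 ≤ C ∧ ∀ n : ℕ, 1 ≤ n → ∀ b : Fin n → Fin n → ℝ, (Matrix.of b).det ≠ 0 →
      ∃ x ∈ Submodule.span ℤ (Set.range b), x ≠ 0 ∧
        ∑ i, |x i| ≤ ((n : ℝ) / 3.659 + C * Real.log ((n : ℝ) + 1)) *
          |(Matrix.of b).det| ^ ((1 : ℝ) / n) := by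
  obtain ⟨N, hN⟩ := rk_large
  have hl2 : 0 < Real.log 2 := Real.log_pos (by norm_num)
  refine ⟨2 * N / Real.log 2, by positivity, fun n hn b hd => ?_⟩
  have hli : LinearIndependent ℝ b :=
    Matrix.linearIndependent_rows_of_det_ne_zero hd
  have : Nonempty (Fin n) := ⟨⟨0, hn⟩⟩
  set B := basisOfLinearIndependentOfCardEqFinrank hli (by simp) with hB
  have hBb : (B : Fin n → Fin n → ℝ) = b := coe_basisOfLinearIndependentOfCardEqFinrank _ _
  have hn0 : (0 : ℝ) ≤ n := by positivity
  have hlog : Real.log 2 ≤ Real.log ((n : ℝ) + 1) := by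
    refine Real.log_le_log (by norm_num) ?_
    have : (1 : ℝ) ≤ n := by exact_mod_cast hn
    linarith
  have hlog2 : 2 * (N : ℝ) ≤ 2 * N / Real.log 2 * Real.log ((n : ℝ) + 1) := by
    rw [div_mul_eq_mul_div, le_div_iff₀ hl2]
    exact mul_le_mul_of_nonneg_left hlog (by positivity)
  have hdn : 0 ≤ |(Matrix.of b).det| ^ ((1 : ℝ) / n) := by positivity
  rcases le_total N n with h | h
  · obtain ⟨x, hx, hx0, hxs⟩ := hN n h hn B (by rw [hBb]; exact hd)
    rw [hBb] at hx hxs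
    refine ⟨x, hx, hx0, hxs.trans (mul_le_mul_of_nonneg_right ?_ hdn)⟩
    have : (0 : ℝ) ≤ 2 * N := by positivity
    linarith
  · obtain ⟨x, hx, hx0, hxs⟩ := rk_small hn B (by rw [hBb]; exact hd)
    rw [hBb] at hx hxs
    refine ⟨x, hx, hx0, hxs.trans (mul_le_mul_of_nonneg_right ?_ hdn)⟩
    have : (n : ℝ) ≤ N := by exact_mod_cast h
    have : (0 : ℝ) ≤ n / 3.659 := by positivity
    linarith
end

section
/- Let f(x) = ((1−x)/(2−x))^{x−1}·(e/x)^x·Γ(x+1) for x ∈ [1/2, 1]. Then f(x) < 3.6594 for all x ∈ [1/2, 1], and there exists x ∈ [1/2, 1] with f(x) > 3.6593. -/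
open Filter Topology Finset in
lemma log_num (q r t : ℝ) (k : ℤ) (ht : 0 ≤ t) (ht1 : t < 1) (hr : r = (1 + t) / (1 - t))
    (hq : q = r * 2 ^ k) :
    2 * (∑ i ∈ range 9, t ^ (2 * i + 1) / (2 * i + 1)) + k * Real.log 2 ≤ Real.log q ∧
    Real.log q ≤ 2 * ((∑ i ∈ range 9, t ^ (2 * i + 1) / (2 * i + 1)) + t ^ (2 * 9 + 1) / (1 - t ^ 2))
      + k * Real.log 2 := by
  have h1 := Real.sum_range_le_log_div ht ht1 9
  have h2 := Real.log_div_le_sum_range_add ht ht1 9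
  have hpos : 0 < (1 + t) / (1 - t) := div_pos (by linarith) (by linarith)
  have : Real.log q = Real.log ((1 + t) / (1 - t)) + k * Real.log 2 := by
    rw [hq, hr, Real.log_mul hpos.ne' (by positivity), Real.log_zpow]
  rw [this]
  push_cast at *
  constructor <;> linarith

lemma lg0 : (-103696236/10^8 : ℝ) < Real.log (35453/100000) ∧ Real.log (35453/100000) < -103696227/10^8 := by
  have h := log_num (35453/100000) (35453/25000) (10453/60453) (-2) (by norm_num) (by norm_num) (by norm_num) (by norm_num)
  have h2 := Real.log_two_gt_d9
  have h3 := Real.log_two_lt_d9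
  norm_num [Finset.sum_range_succ] at h
  constructor <;> linarith [h.1, h.2]

lemma lg1 : (30345449/10^8 : ℝ) < Real.log (135453/100000) ∧ Real.log (135453/100000) < 30345458/10^8 := by
  have h := log_num (135453/100000) (135453/100000) (35453/235453) (0) (by norm_num) (by norm_num) (by norm_num) (by norm_num)
  have h2 := Real.log_two_gt_d9
  have h3 := Real.log_two_lt_d9
  norm_num [Finset.sum_range_succ] at h
  constructor <;> linarith [h.1, h.2]

lemma lg2 : (-43777659/10^8 : ℝ) < Real.log (64547/100000) ∧ Real.log (64547/100000) < -43777650/10^8 := by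
  have h := log_num (64547/100000) (64547/50000) (14547/114547) (-1) (by norm_num) (by norm_num) (by norm_num) (by norm_num)
  have h2 := Real.log_two_gt_d9
  have h3 := Real.log_two_lt_d9
  norm_num [Finset.sum_range_succ] at h
  constructor <;> linarith [h.1, h.2]

lemma lg3 : (49802601/10^8 : ℝ) < Real.log (164547/100000) ∧ Real.log (164547/100000) < 49802610/10^8 := by
  have h := log_num (164547/100000) (164547/100000) (64547/264547) (0) (by norm_num) (by norm_num) (by norm_num) (by norm_num)
  have h2 := Real.log_two_gt_d9
  have h3 := Real.log_two_lt_d9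
  norm_num [Finset.sum_range_succ] at h
  constructor <;> linarith [h.1, h.2]

lemma lg4 : (97284870/10^8 : ℝ) < Real.log (264547/100000) ∧ Real.log (264547/100000) < 97284879/10^8 := by
  have h := log_num (264547/100000) (264547/200000) (64547/464547) (1) (by norm_num) (by norm_num) (by norm_num) (by norm_num)
  have h2 := Real.log_two_gt_d9
  have h3 := Real.log_two_lt_d9
  norm_num [Finset.sum_range_succ] at h
  constructor <;> linarith [h.1, h.2]

lemma lg5 : (129348526/10^8 : ℝ) < Real.log (364547/100000) ∧ Real.log (364547/100000) < 129348535/10^8 := by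
  have h := log_num (364547/100000) (364547/200000) (164547/564547) (1) (by norm_num) (by norm_num) (by norm_num) (by norm_num)
  have h2 := Real.log_two_gt_d9
  have h3 := Real.log_two_lt_d9
  norm_num [Finset.sum_range_succ] at h
  constructor <;> linarith [h.1, h.2]

lemma lg6 : (153589251/10^8 : ℝ) < Real.log (464547/100000) ∧ Real.log (464547/100000) < 153589260/10^8 := by
  have h := log_num (464547/100000) (464547/400000) (64547/864547) (2) (by norm_num) (by norm_num) (by norm_num) (by norm_num)
  have h2 := Real.log_two_gt_d9
  have h3 := Real.log_two_lt_d9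
  norm_num [Finset.sum_range_succ] at h
  constructor <;> linarith [h.1, h.2]

lemma lg7 : (173085341/10^8 : ℝ) < Real.log (564547/100000) ∧ Real.log (564547/100000) < 173085350/10^8 := by
  have h := log_num (564547/100000) (564547/400000) (164547/964547) (2) (by norm_num) (by norm_num) (by norm_num) (by norm_num)
  have h2 := Real.log_two_gt_d9
  have h3 := Real.log_two_lt_d9
  norm_num [Finset.sum_range_succ] at h
  constructor <;> linarith [h.1, h.2]

lemma lg8 : (189393537/10^8 : ℝ) < Real.log (664547/100000) ∧ Real.log (664547/100000) < 189393546/10^8 := by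
  have h := log_num (664547/100000) (664547/400000) (264547/1064547) (2) (by norm_num) (by norm_num) (by norm_num) (by norm_num)
  have h2 := Real.log_two_gt_d9
  have h3 := Real.log_two_lt_d9
  norm_num [Finset.sum_range_succ] at h
  constructor <;> linarith [h.1, h.2]

/-- Stirling main term. -/
noncomputable def stS (z : ℝ) : ℝ := (z - 1 / 2) * Real.log z - z + 1 / (12 * z)

open Filter Topology in
lemma stirling_limit (z : ℝ) (hz : 0 < z) :
    Tendsto (fun n : ℕ => Real.log (Real.Gamma (z + n + 1)) - stS (z + n + 1)) atTop
      (𝓝 (Real.log (2 * Real.pi) / 2)) := by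
  have h1 := Real.BohrMollerup.tendsto_log_gamma hz
  have h2 : Tendsto (fun n : ℕ => Real.log (Stirling.stirlingSeq n)) atTop
      (𝓝 (Real.log (√Real.pi))) :=
    (Real.continuousAt_log (by positivity)).tendsto.comp Stirling.tendsto_stirlingSeq_sqrt_pi
  have h3 : Tendsto (fun n : ℕ => (n : ℝ) * Real.log (1 + (z + 1) / n)) atTop (𝓝 (z + 1)) :=
    (Real.tendsto_mul_log_one_add_div_atTop (z + 1)).comp tendsto_natCast_atTop_atTop
  have h0 : Tendsto (fun n : ℕ => (z + 1) / (n : ℝ)) atTop (𝓝 0) :=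
    tendsto_const_div_atTop_nhds_zero_nat (z + 1)
  have h4 : Tendsto (fun n : ℕ => Real.log (1 + (z + 1) / n)) atTop (𝓝 0) := by
    have : Tendsto (fun n : ℕ => 1 + (z + 1) / (n : ℝ)) atTop (𝓝 1) := by
      simpa using h0.const_add 1
    have h := (Real.continuousAt_log (x := 1) (by norm_num)).tendsto.comp this
    rw [Real.log_one] at h
    exact h
  have h5 : Tendsto (fun n : ℕ => 1 / (12 * (z + n + 1))) atTop (𝓝 (0 : ℝ)) := by
    have : Tendsto (fun n : ℕ => 12 * (z + n + 1)) atTop atTop := by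
      apply Tendsto.const_mul_atTop (by norm_num)
      exact tendsto_atTop_add_const_right _ _
        (tendsto_atTop_add_const_left _ _ tendsto_natCast_atTop_atTop)
    simp only [one_div]; exact this.inv_tendsto_atTop
  have hrec : ∀ n : ℕ, Real.log (Real.Gamma (z + n + 1)) =
      Real.log (Real.Gamma z) + ∑ m ∈ Finset.range (n + 1), Real.log (z + m) := by
    intro n
    induction n with
    | zero =>
      have := Real.Gamma_pos_of_pos hz
      simp [Real.Gamma_add_one hz.ne', Real.log_mul hz.ne' this.ne', add_comm]
    | succ n ih =>
      have hp : 0 < z + n + 1 := by positivity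
      have := Real.Gamma_pos_of_pos hp
      rw [Finset.sum_range_succ, ← add_assoc, ← ih]
      push_cast
      rw [← add_assoc z, Real.Gamma_add_one hp.ne', Real.log_mul hp.ne' this.ne']
      ring
  have key := ((((h1.const_sub (Real.log (Real.Gamma z))).add h2).sub h3).sub
    (h4.const_mul (z + 1 / 2))).sub h5
  have key2 := key.add_const (z + 1 + Real.log 2 / 2)
  have e : Real.log (Real.Gamma z) - Real.log (Real.Gamma z) + Real.log √Real.pi - (z + 1)
      - (z + 1 / 2) * 0 - 0 + (z + 1 + Real.log 2 / 2) = Real.log (2 * Real.pi) / 2 := by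
    rw [Real.log_sqrt Real.pi_pos.le, Real.log_mul (by norm_num) Real.pi_ne_zero]; ring
  rw [e] at key2
  refine key2.congr' ?_
  filter_upwards [eventually_gt_atTop 0] with n hn
  have hn' : (0 : ℝ) < n := by exact_mod_cast hn
  have hl : Real.log (1 + (z + 1) / n) = Real.log (z + n + 1) - Real.log n := by
    rw [← Real.log_div (by positivity) hn'.ne']; congr 1; field_simp; ring
  rw [hrec, Stirling.log_stirlingSeq_formula, hl, Real.BohrMollerup.logGammaSeq, stS,
    Real.log_mul (by norm_num) hn'.ne', Real.log_div hn'.ne' (by positivity), Real.log_exp]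
  ring

lemma log_step (z : ℝ) (hz : 0 < z) :
    Real.log (Real.Gamma (z + 1)) = Real.log (Real.Gamma z) + Real.log z := by
  rw [Real.Gamma_add_one hz.ne', Real.log_mul hz.ne' (Real.Gamma_pos_of_pos hz).ne']; ring

lemma artanh_sub (z : ℝ) (hz : 0 < z) :
    (1 + 1 / (2 * z + 1)) / (1 - 1 / (2 * z + 1)) = (z + 1) / z := by
  have : 2 * z + 1 ≠ 0 := by positivity
  have h : 1 - 1 / (2 * z + 1) ≠ 0 := by
    have : 1 - 1 / (2 * z + 1) = 2 * z / (2 * z + 1) := by field_simp; ring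
    rw [this]; positivity
  field_simp
  ring

lemma log_up (z : ℝ) (hz : 0 < z) :
    (z + 1 / 2) * (Real.log (z + 1) - Real.log z) ≤ 1 + 1 / (12 * z) - 1 / (12 * (z + 1)) := by
  have ht : (0 : ℝ) ≤ 1 / (2 * z + 1) := by positivity
  have ht1 : 1 / (2 * z + 1) < 1 := by rw [div_lt_one (by positivity)]; linarith
  have hA := Real.hasSum_log_sub_log_of_abs_lt_one
    (show |1 / (2 * z + 1)| < 1 by rwa [abs_of_nonneg ht])
  have hp : 0 < 1 - 1 / (2 * z + 1) := by linarith
  rw [← Real.log_div (by positivity) hp.ne', artanh_sub z hz,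
    Real.log_div (by positivity) hz.ne'] at hA
  set t := 1 / (2 * z + 1) with htd
  have ht2 : t ^ 2 < 1 := by nlinarith
  have hB := ((hasSum_geometric_of_lt_one (sq_nonneg t) ht2).mul_left (2 * t / 3)).add
    (hasSum_ite_eq (0 : ℕ) (4 * t / 3))
  have hle := hasSum_le (fun k => ?_) hA hB
  · have h' := mul_le_mul_of_nonneg_left hle (show 0 ≤ z + 1 / 2 by positivity)
    refine h'.trans (le_of_eq ?_)
    have h1 : 1 - t ^ 2 = 4 * z * (z + 1) / (2 * z + 1) ^ 2 := by
      rw [htd]; field_simp; ring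
    rw [h1, htd]
    field_simp
    ring
  · rcases Nat.eq_zero_or_pos k with rfl | hk
    · simp; linarith
    · have hk' : (1 : ℝ) ≤ k := by exact_mod_cast hk
      have : (1 : ℝ) / (2 * k + 1) ≤ 1 / 3 := by
        apply one_div_le_one_div_of_le <;> linarith
      simp only [hk.ne', if_false, add_zero]
      have e : t ^ (2 * k + 1) = t * (t ^ 2) ^ k := by rw [← pow_mul]; ring
      rw [e]
      have : 0 ≤ t * (t ^ 2) ^ k := by positivity
      nlinarith

lemma log_low (z : ℝ) (hz : 0 < z) :
    1 + 1 / (3 * (2 * z + 1) ^ 2) + 1 / (5 * (2 * z + 1) ^ 4) ≤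
      (z + 1 / 2) * (Real.log (z + 1) - Real.log z) := by
  have ht : (0 : ℝ) ≤ 1 / (2 * z + 1) := by positivity
  have ht1 : 1 / (2 * z + 1) < 1 := by rw [div_lt_one (by positivity)]; linarith
  have h := Real.sum_range_le_log_div ht ht1 3
  rw [artanh_sub z hz, Real.log_div (by positivity) hz.ne'] at h
  have h' := mul_le_mul_of_nonneg_left h (show 0 ≤ 2 * z + 1 by positivity)
  refine le_trans (le_of_eq ?_) (h'.trans (le_of_eq ?_))
  · simp [Finset.sum_range_succ]; field_simp; ring
  · ring

lemma Gamma_upper (z : ℝ) (hz : 0 < z) :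
    Real.log (Real.Gamma z) ≤ stS z + Real.log (2 * Real.pi) / 2 := by
  have mono : Monotone (fun n : ℕ => Real.log (Real.Gamma (z + n)) - stS (z + n)) := by
    refine monotone_nat_of_le_succ fun n => ?_
    have hp : 0 < z + n := by positivity
    have := log_up (z + n) hp
    push_cast
    rw [← add_assoc, log_step _ hp]
    simp only [stS]
    linarith
  have h := stirling_limit z hz
  have h' : Filter.Tendsto (fun n : ℕ => Real.log (Real.Gamma (z + n)) - stS (z + n)) Filter.atTop
      (nhds (Real.log (2 * Real.pi) / 2)) := by
    rw [← Filter.tendsto_add_atTop_iff_nat 1]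
    simpa [add_assoc] using h
  have := mono.ge_of_tendsto h' 0
  simp at this
  linarith

lemma Gamma_lower (z : ℝ) (hz : 0 < z) :
    stS z - 1 / (360 * z ^ 3) + Real.log (2 * Real.pi) / 2 ≤ Real.log (Real.Gamma z) := by
  have mono : Antitone (fun n : ℕ => Real.log (Real.Gamma (z + n)) - stS (z + n)
      + 1 / (360 * (z + n) ^ 3)) := by
    refine antitone_nat_of_succ_le fun n => ?_
    have hp : 0 < z + n := by positivity
    have := log_low (z + n) hp
    push_cast
    rw [← add_assoc, log_step _ hp]
    simp only [stS]
    generalize z + n = w at *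
    have : 1 / (12 * w) - 1 / (12 * (w + 1)) + 1 / (360 * (w + 1) ^ 3) - 1 / (360 * w ^ 3)
        ≤ 1 / (3 * (2 * w + 1) ^ 2) + 1 / (5 * (2 * w + 1) ^ 4) := by
      rw [← sub_nonneg]
      have : 1 / (3 * (2 * w + 1) ^ 2) + 1 / (5 * (2 * w + 1) ^ 4) - (1 / (12 * w) - 1 / (12 * (w + 1)) + 1 / (360 * (w + 1) ^ 3) - 1 / (360 * w ^ 3)) = (1 + 11 * (w * (w + 1)) + 10 * (w * (w + 1)) ^ 2) / (360 * (w * (w + 1)) ^ 3 * (2 * w + 1) ^ 4) := by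
        field_simp
        ring
      rw [this]
      positivity
    linarith
  have h := stirling_limit z hz
  have h' : Filter.Tendsto (fun n : ℕ => Real.log (Real.Gamma (z + n)) - stS (z + n)
      + 1 / (360 * (z + n) ^ 3)) Filter.atTop (nhds (Real.log (2 * Real.pi) / 2 + 0)) := by
    apply Filter.Tendsto.add
    · rw [← Filter.tendsto_add_atTop_iff_nat 1]
      simpa [add_assoc] using h
    · have : Filter.Tendsto (fun n : ℕ => 360 * (z + n) ^ 3) Filter.atTop Filter.atTop := by
        apply Filter.Tendsto.const_mul_atTop (by norm_num)
        exact (Filter.tendsto_pow_atTop (by norm_num)).comp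
          (Filter.tendsto_atTop_add_const_left _ _ tendsto_natCast_atTop_atTop)
      simp only [one_div]; exact this.inv_tendsto_atTop
  have := mono.le_of_tendsto h' 0
  simp at this
  simp
  linarith

/-- Upper bound for the logarithm of the function. -/
noncomputable def FF (x : ℝ) : ℝ :=
  -((1 - x) * Real.log (1 - x)) + (1 - x) * Real.log (2 - x) + x - x * Real.log x
  + (x + 11 / 2) * Real.log (x + 6) - (x + 6) + Real.log (2 * Real.pi) / 2 + 1 / (12 * (x + 6))
  - (Real.log (x + 1) + Real.log (x + 2) + Real.log (x + 3) + Real.log (x + 4) + Real.log (x + 5))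

/-- Its derivative. -/
noncomputable def FF1 (x : ℝ) : ℝ :=
  Real.log (1 - x) - Real.log (2 - x) + 1 / (2 - x) - Real.log x
  + Real.log (x + 6) - 1 / 2 * (x + 6)⁻¹ - 1 / 12 * ((x + 6) ^ 2)⁻¹
  - ((x + 1)⁻¹ + (x + 2)⁻¹ + (x + 3)⁻¹ + (x + 4)⁻¹ + (x + 5)⁻¹)

/-- Its second derivative. -/
noncomputable def FF2 (x : ℝ) : ℝ :=
  -1 / (1 - x) + 1 / (2 - x) + 1 / (2 - x) ^ 2 - 1 / x
  + 1 / (x + 6) + 1 / (2 * (x + 6) ^ 2) + 1 / (6 * (x + 6) ^ 3)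
  + (1 / (x + 1) ^ 2 + 1 / (x + 2) ^ 2 + 1 / (x + 3) ^ 2 + 1 / (x + 4) ^ 2 + 1 / (x + 5) ^ 2)

lemma hasDeriv_log_add (x c : ℝ) (h : 0 < x + c) :
    HasDerivAt (fun y => Real.log (y + c)) (1 / (x + c)) x :=
  ((hasDerivAt_id x).add_const c).log h.ne'

lemma hasDeriv_log_sub (x c : ℝ) (h : 0 < c - x) :
    HasDerivAt (fun y => Real.log (c - y)) (-1 / (c - x)) x :=
  ((hasDerivAt_id x).const_sub c).log h.ne'

lemma hasDeriv_inv_add (x c : ℝ) (h : 0 < x + c) :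
    HasDerivAt (fun y => (y + c)⁻¹) (-1 / (x + c) ^ 2) x :=
  ((hasDerivAt_id x).add_const c).inv h.ne'

lemma FF_deriv (x : ℝ) (h0 : 0 < x) (h1 : x < 1) : HasDerivAt FF (FF1 x) x := by
  have a1 : 0 < 1 - x := by linarith
  have a2 : 0 < 2 - x := by linarith
  have i := hasDerivAt_id x
  have d := (((((((((i.const_sub 1).mul (hasDeriv_log_sub x 1 a1)).neg.add
    ((i.const_sub 1).mul (hasDeriv_log_sub x 2 a2))).add i).sub
    (i.mul (Real.hasDerivAt_log h0.ne'))).add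
    ((i.add_const (11 / 2)).mul (hasDeriv_log_add x 6 (by linarith)))).sub
    (i.add_const 6)).add_const (Real.log (2 * Real.pi) / 2)).add
    ((hasDeriv_inv_add x 6 (by linarith)).const_mul (1 / 12))).sub
    (((((hasDeriv_log_add x 1 (by linarith)).add (hasDeriv_log_add x 2 (by linarith))).add
    (hasDeriv_log_add x 3 (by linarith))).add (hasDeriv_log_add x 4 (by linarith))).add
    (hasDeriv_log_add x 5 (by linarith)))
  refine (d.congr_deriv ?_).congr_of_eventuallyEq (Filter.Eventually.of_forall fun y => ?_)
  · simp only [FF1, id]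
    have e1 : (1 - x) * (-1 / (1 - x)) = -1 := by field_simp
    have e2 : (1 - x) * (-1 / (2 - x)) = 1 / (2 - x) - 1 := by field_simp; ring
    have e3 : x * x⁻¹ = 1 := by field_simp
    have e4 : (x + 11 / 2) * (1 / (x + 6)) = 1 - 1 / 2 * (x + 6)⁻¹ := by
      field_simp; ring
    rw [e1, e2, e3, e4]
    ring
  · simp only [FF, id, Pi.add_apply, Pi.sub_apply, Pi.mul_apply, Pi.neg_apply]
    rw [one_div, mul_inv]
    ring

lemma FF1_deriv (x : ℝ) (h0 : 0 < x) (h1 : x < 1) : HasDerivAt FF1 (FF2 x) x := by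
  have a1 : 0 < 1 - x := by linarith
  have a2 : 0 < 2 - x := by linarith
  have i := hasDerivAt_id x
  have s := ((i.add_const 6).pow 2).inv (by simp; positivity)
  have d := ((((((((hasDeriv_log_sub x 1 a1)).sub
    (hasDeriv_log_sub x 2 a2)).add ((i.const_sub 2).inv a2.ne')).sub
    (Real.hasDerivAt_log h0.ne')).add
    (hasDeriv_log_add x 6 (by linarith))).sub
    ((hasDeriv_inv_add x 6 (by linarith)).const_mul (1 / 2))).sub
    (s.const_mul (1 / 12))).sub
    (((((hasDeriv_inv_add x 1 (by linarith)).add (hasDeriv_inv_add x 2 (by linarith))).add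
    (hasDeriv_inv_add x 3 (by linarith))).add (hasDeriv_inv_add x 4 (by linarith))).add
    (hasDeriv_inv_add x 5 (by linarith)))
  refine (d.congr_deriv ?_).congr_of_eventuallyEq (Filter.Eventually.of_forall fun y => ?_)
  · simp only [FF2, id, Pi.pow_apply]
    have e : -(((2 : ℕ) : ℝ) * (x + 6) ^ (2 - 1) * 1) / ((x + 6) ^ 2) ^ 2 = -2 / (x + 6) ^ 3 := by
      push_cast; field_simp
    rw [e]
    field_simp
    ring
  · simp [FF1, id]

lemma FF2_neg (x : ℝ) (h0 : 2 / 5 < x) (h1 : x < 1) : FF2 x ≤ 0 := by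
  have a1 : 0 < 1 - x := by linarith
  have a2 : 0 < 2 - x := by linarith
  have b : ∀ c : ℝ, 0 ≤ c → 1 / (x + c) ^ 2 ≤ 1 / (2 / 5 + c) ^ 2 := by
    intro c hc
    gcongr
  have c1 : 1 / (x + 6) ≤ 1 / (2 / 5 + 6) := by gcongr
  have c2 : 1 / (2 * (x + 6) ^ 2) ≤ 1 / (2 * (2 / 5 + 6) ^ 2) := by gcongr
  have c3 : 1 / (6 * (x + 6) ^ 3) ≤ 1 / (6 * (2 / 5 + 6) ^ 3) := by gcongr
  have c4 : 1 / 1 ≤ 1 / x := by gcongr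
  have c5 : -1 / (1 - x) + 1 / (2 - x) + 1 / (2 - x) ^ 2 ≤ - 1 / 2 := by
    have : -1 / (1 - x) + 1 / (2 - x) + 1 / (2 - x) ^ 2 - (- 1 / 2)
      = - ((2 - x) ^ 2 * 2 - 2 * (1 - x) * (2 - x) - 2 * (1 - x) - (1 - x) * (2 - x) ^ 2)
        / (2 * (1 - x) * (2 - x) ^ 2) := by
      field_simp; ring
    rw [← sub_nonpos, this]
    apply div_nonpos_of_nonpos_of_nonneg _ (by positivity)
    nlinarith [mul_pos a1 a2, mul_pos a1 (sub_pos.2 h0), mul_pos (mul_pos a1 a1) (sub_pos.2 h0)]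
  have := b 1 (by norm_num)
  have := b 2 (by norm_num)
  have := b 3 (by norm_num)
  have := b 4 (by norm_num)
  have := b 5 (by norm_num)
  unfold FF2
  norm_num at *
  linarith

lemma log_two_pi : (183787704/10^8 : ℝ) < Real.log (2 * Real.pi) ∧
    Real.log (2 * Real.pi) < 183787710/10^8 := by
  have h2 := Real.log_two_gt_d9
  have h3 := Real.log_two_lt_d9
  have p1 := Real.pi_gt_d20
  have p2 := Real.pi_lt_d20
  constructor
  · have h := log_num (6283185307/10^9) (6283185307/(4*10^9)) (2283185307/10283185307) 2 (by norm_num) (by norm_num) (by norm_num) (by norm_num)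
    have : Real.log (6283185307/10^9) ≤ Real.log (2 * Real.pi) := by
      apply Real.log_le_log (by norm_num); norm_num at *; linarith
    norm_num [Finset.sum_range_succ] at h
    norm_num at this
    linarith [h.1]
  · have h := log_num (6283185308/10^9) (6283185308/(4*10^9)) (2283185308/10283185308) 2 (by norm_num) (by norm_num) (by norm_num) (by norm_num)
    have : Real.log (2 * Real.pi) ≤ Real.log (6283185308/10^9) := by
      apply Real.log_le_log (by positivity); norm_num at *; linarith
    norm_num [Finset.sum_range_succ] at h
    norm_num at this
    linarith [h.2]

lemma FF_x0 : (1.297274 : ℝ) + 1 / (360 * (64547 / 100000 + 6) ^ 3) < FF (64547/100000) ∧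
    FF (64547/100000) < 1.297291 := by
  have := lg0
  have := lg1
  have := lg2
  have := lg3
  have := lg4
  have := lg5
  have := lg6
  have := lg7
  have := lg8
  have := log_two_pi
  unfold FF
  norm_num at *
  constructor <;> linarith

lemma FF1_x0 : |FF1 (64547/100000)| < 1 / 10 ^ 5 * 2 := by
  have := lg0
  have := lg1
  have := lg2
  have := lg3
  have := lg4
  have := lg5
  have := lg6
  have := lg7
  have := lg8
  unfold FF1
  rw [abs_lt]
  norm_num at *
  constructor <;> linarith

lemma FF_le (x : ℝ) (h0 : 1 / 2 ≤ x) (h1 : x < 1) : FF x < 1.297299 := by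
  have hc : ConcaveOn ℝ (Set.Ioo (2 / 5 : ℝ) 1) FF := by
    apply concaveOn_of_hasDerivWithinAt2_nonpos (convex_Ioo _ _) (f' := FF1) (f'' := FF2)
    · intro y hy
      exact (FF_deriv y (by linarith [hy.1]) hy.2).continuousAt.continuousWithinAt
    · intro y hy
      rw [interior_Ioo] at hy
      exact (FF_deriv y (by linarith [hy.1]) hy.2).hasDerivWithinAt
    · intro y hy
      rw [interior_Ioo] at hy
      exact (FF1_deriv y (by linarith [hy.1]) hy.2).hasDerivWithinAt
    · intro y hy
      rw [interior_Ioo] at hy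
      exact FF2_neg y hy.1 hy.2
  have hd := FF_deriv (64547/100000) (by norm_num) (by norm_num)
  have hx0 : (64547/100000 : ℝ) ∈ Set.Ioo (2 / 5 : ℝ) 1 := by constructor <;> norm_num
  have hx : x ∈ Set.Ioo (2 / 5 : ℝ) 1 := ⟨by linarith, h1⟩
  have hb := FF_x0.2
  have hb1 := abs_lt.1 FF1_x0
  have hs : FF x ≤ FF (64547/100000) + FF1 (64547/100000) * (x - 64547/100000) := by
    rcases lt_trichotomy x (64547/100000) with h | h | h
    · have := hc.le_slope_of_hasDerivAt hx hx0 h hd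
      rw [slope_def_field, le_div_iff₀ (by linarith)] at this
      linarith
    · rw [← h]; simp
    · have := hc.slope_le_of_hasDerivAt hx0 hx h hd
      rw [slope_def_field, div_le_iff₀ (by linarith)] at this
      linarith
  norm_num at *
  rcases le_total x (64547/100000) with h | h <;> nlinarith [hb1.1, hb1.2]

lemma log_Gamma_shift (x : ℝ) (h : 0 < x) : Real.log (Real.Gamma (x + 1)) =
    Real.log (Real.Gamma (x + 6)) -
    (Real.log (x + 1) + Real.log (x + 2) + Real.log (x + 3) + Real.log (x + 4) + Real.log (x + 5)) := by
  have h1 := log_step (x + 1) (by linarith)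
  have h2 := log_step (x + 2) (by linarith)
  have h3 := log_step (x + 3) (by linarith)
  have h4 := log_step (x + 4) (by linarith)
  have h5 := log_step (x + 5) (by linarith)
  rw [add_assoc] at h1 h2 h3 h4 h5
  norm_num at h1 h2 h3 h4 h5
  linarith

lemma fun_eq (x : ℝ) (h0 : 0 < x) (h1 : x < 1) :
    ((1 - x) / (2 - x)) ^ (x - 1) * (Real.exp 1 / x) ^ x * Real.Gamma (x + 1) =
    Real.exp (-((1 - x) * Real.log (1 - x)) + (1 - x) * Real.log (2 - x) + x - x * Real.log x
      + Real.log (Real.Gamma (x + 1))) := by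
  have a1 : 0 < 1 - x := by linarith
  have a2 : 0 < 2 - x := by linarith
  rw [Real.rpow_def_of_pos (by positivity), Real.rpow_def_of_pos (by positivity),
    Real.log_div a1.ne' a2.ne', Real.log_div (by positivity) h0.ne', Real.log_exp,
    Real.exp_add, Real.exp_log (Real.Gamma_pos_of_pos (by linarith)), ← Real.exp_add]
  congr 2
  ring

lemma log_final : (1.297299 : ℝ) < Real.log 3.6594 ∧ Real.log 3.6593 < 1.297274 := by
  have h2 := Real.log_two_gt_d9
  have h3 := Real.log_two_lt_d9
  have ha := log_num (3.6594) (1.8297) (8297/28297) 1 (by norm_num) (by norm_num) (by norm_num) (by norm_num)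
  have hb := log_num (3.6593) (1.82965) (82965/282965) 1 (by norm_num) (by norm_num) (by norm_num) (by norm_num)
  norm_num [Finset.sum_range_succ] at ha hb ⊢
  constructor
  · linarith [ha.1]
  · linarith [hb.2]


open Real in
/-- The function `f(x) = ((1-x)/(2-x))^(x-1) · (e/x)^x · Γ(x+1)` (real powers,
so that at `x = 1` the first factor is `0^0 = 1`, its limit as `x → 1⁻`)
satisfies `f(x) < 3.6594` on `[1/2, 1]`, and exceeds `3.6593` somewhere
on `[1/2, 1]`. -/
theorem rankin_constant_bounds :
    (∀ x ∈ Set.Icc (1 / 2 : ℝ) 1,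
      ((1 - x) / (2 - x)) ^ (x - 1) * (exp 1 / x) ^ x * Gamma (x + 1) < 3.6594) ∧
    (∃ x ∈ Set.Icc (1 / 2 : ℝ) 1,
      ((1 - x) / (2 - x)) ^ (x - 1) * (exp 1 / x) ^ x * Gamma (x + 1) > 3.6593) := by
  constructor
  · intro x hx
    rcases eq_or_lt_of_le hx.2 with h | h
    · subst h
      have : Gamma (1 + 1) = 1 := by rw [Gamma_add_one one_ne_zero, Gamma_one]; norm_num
      rw [this]
      norm_num
      linarith [Real.exp_one_lt_d9]
    · have h0 : 0 < x := by linarith [hx.1]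
      rw [fun_eq x h0 h, ← Real.lt_log_iff_exp_lt (by norm_num)]
      refine lt_of_le_of_lt ?_ ((FF_le x hx.1 h).trans log_final.1)
      have hg := Gamma_upper (x + 6) (by linarith)
      rw [log_Gamma_shift x h0]
      unfold FF
      unfold stS at hg
      linarith
  · refine ⟨64547/100000, by constructor <;> norm_num, ?_⟩
    rw [fun_eq _ (by norm_num) (by norm_num), gt_iff_lt, ← Real.log_lt_iff_lt_exp (by norm_num)]
    refine log_final.2.trans ?_
    have hb := FF_x0.1
    have hg := Gamma_lower (64547/100000 + 6) (by norm_num)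
    rw [log_Gamma_shift _ (by norm_num)]
    unfold FF at hb
    unfold stS at hg
    linarith
end

section
/- For every n ≥ 1 there exists a full-rank lattice L in ℝⁿ such that every nonzero vector x ∈ L satisfies ‖x‖₁ > (ζ(n)·n!·det(L))^{1/n}/2, where ζ is the Riemann zeta function. -/
lemma ball_count (n : ℕ) : ∃ F : ℕ → Finset (Fin n → ℤ), ∀ m,
    (F m).card ≤ 2 ^ n * (m + n).choose n ∧ ∀ x : Fin n → ℤ, ∑ i, (x i).natAbs ≤ m → x ∈ F m := by
  induction n with
  | zero => exact ⟨fun _ => Finset.univ, fun m => ⟨by simp, fun x _ => Finset.mem_univ _⟩⟩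
  | succ n ih =>
    obtain ⟨F, hF⟩ := ih
    refine ⟨fun m => (Finset.range (m + 1)).biUnion (fun j =>
      (F j).image (fun y => (Fin.cons ((m : ℤ) - j) y : Fin (n + 1) → ℤ)) ∪
      (F j).image (fun y => (Fin.cons (-((m : ℤ) - j)) y : Fin (n + 1) → ℤ))), fun m => ⟨?_, ?_⟩⟩
    · refine Finset.card_biUnion_le.trans ?_
      calc _ ≤ ∑ j ∈ Finset.range (m + 1), 2 ^ (n + 1) * (j + n).choose n := by
            refine Finset.sum_le_sum fun j _ => ?_
            refine (Finset.card_union_le _ _).trans ?_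
            have h1 := (hF j).1
            have h2 := Finset.card_image_le (s := F j)
              (f := fun y => (Fin.cons ((m : ℤ) - j) y : Fin (n + 1) → ℤ))
            have h3 := Finset.card_image_le (s := F j)
              (f := fun y => (Fin.cons (-((m : ℤ) - j)) y : Fin (n + 1) → ℤ))
            rw [pow_succ]
            linarith
        _ = _ := by
            rw [← Finset.mul_sum, Nat.sum_range_add_choose, add_assoc]
    · intro x hx
      rw [Fin.sum_univ_succ] at hx
      simp only [Finset.mem_biUnion, Finset.mem_range, Finset.mem_union, Finset.mem_image]
      refine ⟨m - (x 0).natAbs, by omega, ?_⟩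
      have hmem := (hF (m - (x 0).natAbs)).2 (Fin.tail x) (by simp only [Fin.tail]; omega)
      rcases le_total 0 (x 0) with h | h
      · left
        refine ⟨_, hmem, ?_⟩
        rw [show (m : ℤ) - ((m - (x 0).natAbs : ℕ) : ℤ) = x 0 by omega]
        exact Fin.cons_self_tail x
      · right
        refine ⟨_, hmem, ?_⟩
        rw [show -((m : ℤ) - ((m - (x 0).natAbs : ℕ) : ℤ)) = x 0 by omega]
        exact Fin.cons_self_tail x

lemma core_avg (k p M : ℕ) (hp : p.Prime) (hM : M < p)
    (hc : 2 ^ (k + 1) * (M + (k + 1)).choose (k + 1) < 2 * p ^ k) :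
    ∃ u : Fin k → ZMod p, ∀ y : Fin (k + 1) → ℤ,
      (∀ j, (y j.succ : ZMod p) = y 0 * u j) → y ≠ 0 → M < ∑ i, (y i).natAbs := by
  haveI := Fact.mk hp
  by_contra! hcon
  choose y hy hy0 hyM using hcon
  obtain ⟨F, hF⟩ := ball_count (k + 1)
  have hne : ∀ u, (y u 0 : ZMod p) ≠ 0 := by
    intro u h0
    apply hy0 u
    funext i
    have hdvd : (p : ℤ) ∣ y u i := by
      rw [← ZMod.intCast_zmod_eq_zero_iff_dvd]
      refine Fin.cases h0 (fun j => ?_) i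
      rw [hy, h0, zero_mul]
    have h1 : (y u i).natAbs ≤ ∑ i, (y u i).natAbs :=
      Finset.single_le_sum (f := fun i => (y u i).natAbs) (fun _ _ => Nat.zero_le _)
        (Finset.mem_univ i)
    have h2 := hyM u
    exact Int.eq_zero_of_abs_lt_dvd hdvd (by rw [Int.abs_eq_natAbs]; omega)
  have hdet : ∀ u v, ∀ s : ℤ, y u = s • y v → u = v := by
    intro u v s h
    funext j
    have a := hy u j
    have b := hy v j
    have hu := hne u
    rw [h] at a hu
    simp only [Pi.smul_apply, smul_eq_mul, Int.cast_mul] at a hu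
    rw [b] at a
    have : ((s : ZMod p) * (y v 0 : ZMod p)) * (u j - v j) = 0 := by
      linear_combination -a
    rcases mul_eq_zero.1 this with h' | h'
    · exact absurd h' hu
    · exact sub_eq_zero.1 h'
  let f : (Fin k → ZMod p) × Bool → (Fin (k + 1) → ℤ) :=
    fun q => if q.2 then y q.1 else - y q.1
  have hinj : Function.Injective f := by
    have key : ∀ u v, y u = - y v → False := by
      intro u v h
      have := hdet u v (-1) (by simpa using h)
      subst this
      apply hy0 u
      exact self_eq_neg.1 h
    rintro ⟨u, s⟩ ⟨v, t⟩ h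
    cases s <;> cases t <;> simp [f] at h
    · rw [hdet u v 1 (by simpa using h)]
    · exact (key v u h.symm).elim
    · exact (key u v h).elim
    · rw [hdet u v 1 (by simpa using h)]
  have hcard : (Finset.univ.image f).card ≤ (F M).card := by
    apply Finset.card_le_card
    intro x hx
    obtain ⟨⟨u, s⟩, -, rfl⟩ := Finset.mem_image.1 hx
    apply (hF M).2
    cases s <;> simp [f] <;> exact hyM u
  rw [Finset.card_image_of_injective _ hinj] at hcard
  simp [ZMod.card] at hcard
  have := (hF M).1
  omega

lemma choose_p (k : ℕ) (hk : 1 ≤ k) : ∃ p : ℕ, p.Prime ∧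
    ∃ M : ℕ, M = ⌊((7 / 4 : ℝ) * ((k + 1).factorial : ℝ) * (p : ℝ) ^ k) ^ ((1 : ℝ) / (k + 1 : ℕ)) / 2⌋₊ ∧
      M < p ∧ 2 ^ (k + 1) * (M + (k + 1)).choose (k + 1) < 2 * p ^ k := by
  set C : ℝ := (7 / 4 : ℝ) * ((k + 1).factorial : ℝ) with hC
  have hfac : (0 : ℝ) < ((k + 1).factorial : ℝ) := by positivity
  have hC0 : 0 < C := by positivity
  let R : ℕ → ℝ := fun p => (C * (p : ℝ) ^ k) ^ ((1 : ℝ) / (k + 1 : ℕ)) / 2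
  have hR : Filter.Tendsto R Filter.atTop Filter.atTop := by
    apply Filter.Tendsto.atTop_div_const (by norm_num)
    apply (tendsto_rpow_atTop (by positivity)).comp
    apply Filter.Tendsto.const_mul_atTop hC0
    exact (Filter.tendsto_pow_atTop (by omega)).comp tendsto_natCast_atTop_atTop
  have h1 : Filter.Tendsto (fun p => (1 + ((k + 1 : ℕ) : ℝ) / R p) ^ (k + 1)) Filter.atTop (nhds 1) := by
    have := ((hR.const_div_atTop ((k + 1 : ℕ) : ℝ)).const_add 1).pow (k + 1)
    simpa using this
  have e1 := h1.eventually (gt_mem_nhds (show (1 : ℝ) < 8 / 7 by norm_num))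
  have e2 := hR.eventually_gt_atTop 0
  have e3 := (tendsto_natCast_atTop_atTop (R := ℝ)).eventually_gt_atTop C
  obtain ⟨N, hN⟩ := Filter.eventually_atTop.1 (e1.and (e2.and e3))
  obtain ⟨p, hpN, hp⟩ := Nat.exists_infinite_primes N
  obtain ⟨a1, a2, a3⟩ := hN p hpN
  have hp0 : (0 : ℝ) < p := by exact_mod_cast hp.pos
  have hRpow : (2 * R p) ^ (k + 1) = C * (p : ℝ) ^ k := by
    have : 2 * R p = (C * (p : ℝ) ^ k) ^ ((1 : ℝ) / (k + 1 : ℕ)) := by simp only [R]; ring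
    rw [this, one_div]
    exact Real.rpow_inv_natCast_pow (by positivity) (by omega)
  refine ⟨p, hp, ⌊R p⌋₊, rfl, ?_, ?_⟩
  · rw [Nat.floor_lt a2.le]
    have : (2 * R p) ^ (k + 1) < (p : ℝ) ^ (k + 1) := by
      rw [hRpow, pow_succ']
      gcongr
    have := lt_of_pow_lt_pow_left₀ _ hp0.le this
    linarith
  · have hfl : ((⌊R p⌋₊ : ℕ) : ℝ) ≤ R p := Nat.floor_le a2.le
    have hch := Nat.choose_le_pow_div (α := ℝ) (k + 1) (⌊R p⌋₊ + (k + 1))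
    have : (2 : ℝ) ^ (k + 1) * ((⌊R p⌋₊ + (k + 1)).choose (k + 1) : ℝ) < 2 * (p : ℝ) ^ k := by
      calc _ ≤ (2 : ℝ) ^ (k + 1) * ((R p + (k + 1 : ℕ)) ^ (k + 1) / ((k + 1).factorial : ℝ)) := by
            gcongr
            refine hch.trans ?_
            push_cast
            gcongr
        _ = (2 * R p) ^ (k + 1) / ((k + 1).factorial : ℝ) * (1 + ((k + 1 : ℕ) : ℝ) / R p) ^ (k + 1) := by
            have : R p + (k + 1 : ℕ) = R p * (1 + ((k + 1 : ℕ) : ℝ) / R p) := by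
              field_simp
            rw [this, mul_pow, mul_pow]
            ring
        _ = (7 / 4) * (p : ℝ) ^ k * (1 + ((k + 1 : ℕ) : ℝ) / R p) ^ (k + 1) := by
            rw [hRpow, hC]
            field_simp
        _ < (7 / 4) * (p : ℝ) ^ k * (8 / 7) := by
            gcongr
        _ = _ := by ring
    exact_mod_cast this

lemma zeta_bounds (n : ℕ) (hn : 2 ≤ n) : 0 ≤ (riemannZeta n).re ∧ (riemannZeta n).re ≤ 7 / 4 := by
  have h : riemannZeta n = ((∑' m : ℕ, 1 / (m : ℝ) ^ n : ℝ) : ℂ) := by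
    rw [zeta_nat_eq_tsum_of_gt_one (by omega)]
    push_cast
    rfl
  rw [h, Complex.ofReal_re]
  refine ⟨tsum_nonneg fun m => by positivity, ?_⟩
  have h2 := hasSum_zeta_two
  have hle : ∑' m : ℕ, 1 / (m : ℝ) ^ n ≤ ∑' m : ℕ, 1 / (m : ℝ) ^ 2 := by
    refine Summable.tsum_le_tsum (fun m => ?_) (Real.summable_one_div_nat_pow.2 (by omega)) h2.summable
    rcases Nat.eq_zero_or_pos m with rfl | hm
    · simp [show n ≠ 0 by omega]
    · have : (1 : ℝ) ≤ m := by exact_mod_cast hm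
      gcongr
  rw [h2.tsum_eq] at hle
  have := Real.pi_lt_d2
  have := Real.pi_pos
  nlinarith

lemma zeta_one_re : (riemannZeta 1).re < 2 := by
  have h1 := Real.eulerMascheroniConstant_lt_two_thirds
  have h2 : 0 ≤ Real.log (4 * Real.pi) := Real.log_nonneg (by linarith [Real.pi_gt_three])
  have : riemannZeta 1 = (((Real.eulerMascheroniConstant - Real.log (4 * Real.pi)) / 2 : ℝ) : ℂ) := by
    rw [riemannZeta_one]
    push_cast
    rw [Complex.ofReal_log (by positivity)]
    push_cast
    rfl
  rw [this, Complex.ofReal_re]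
  linarith

/-- The basis `(1,u)`, `p e_j`. -/
noncomputable def hlBasis (k p : ℕ) (u : Fin k → ZMod p) : Fin (k + 1) → Fin (k + 1) → ℝ :=
  Fin.cons (Fin.cons 1 fun j => ((u j).val : ℝ)) (fun j => Pi.single j.succ (p : ℝ))

lemma hlBasis_det (k p : ℕ) (u : Fin k → ZMod p) :
    (Matrix.of (hlBasis k p u)).det = (p : ℝ) ^ k := by
  rw [Matrix.det_of_upperTriangular]
  · simp [Fin.prod_univ_succ, hlBasis]
  · intro i j hij
    simp only [id] at hij
    revert hij
    refine Fin.cases (fun h => absurd h (by simp)) (fun i hij => ?_) i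
    simp [hlBasis, Pi.single_apply, hij.ne]

lemma hlBasis_mem (k p : ℕ) [NeZero p] (u : Fin k → ZMod p) (x : Fin (k + 1) → ℝ)
    (hx : x ∈ Submodule.span ℤ (Set.range (hlBasis k p u))) :
    ∃ y : Fin (k + 1) → ℤ, (∀ i, x i = y i) ∧ ∀ j : Fin k, (y j.succ : ZMod p) = y 0 * u j := by
  induction hx using Submodule.span_induction with
  | mem x hx =>
    obtain ⟨i, rfl⟩ := hx
    refine Fin.cases ?_ (fun i => ?_) i
    · refine ⟨Fin.cons 1 fun j => ((u j).val : ℤ), fun i => ?_, fun j => ?_⟩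
      · refine Fin.cases ?_ (fun i => ?_) i <;> simp [hlBasis]
      · simp
    · refine ⟨Pi.single i.succ (p : ℤ), fun j => ?_, fun j => ?_⟩
      · simp only [hlBasis, Fin.cons_succ, Pi.single_apply]
        split_ifs <;> simp
      · simp only [Pi.single_apply]
        split_ifs <;> simp_all
  | zero => exact ⟨0, by simp, by simp⟩
  | add a b _ _ ha hb =>
    obtain ⟨y, h1, h2⟩ := ha
    obtain ⟨z, h3, h4⟩ := hb
    exact ⟨y + z, by simp [h1, h3], fun j => by simp [h2, h4, add_mul]⟩
  | smul c a _ ha =>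
    obtain ⟨y, h1, h2⟩ := ha
    exact ⟨c • y, by simp [h1], fun j => by simp [h2, mul_assoc]⟩

/-- Minkowski–Hlawka for the ℓ¹ norm: for every `n ≥ 1` there is a full-rank
lattice in `ℝⁿ` (the ℤ-span of an ℝ-basis, given by the rows `b` of a matrix
with nonzero determinant, whose covolume is `|det b|`) all of whose nonzero
vectors `x` satisfy `‖x‖₁ > (ζ(n)·n!·det L)^(1/n) / 2`. -/
theorem minkowski_hlawka_l1 (n : ℕ) (hn : 1 ≤ n) :
    ∃ b : Fin n → Fin n → ℝ, (Matrix.of b).det ≠ 0 ∧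
      ∀ x ∈ Submodule.span ℤ (Set.range b), x ≠ 0 →
        ∑ i, |x i| >
          ((riemannZeta n).re * (n.factorial : ℝ) * |(Matrix.of b).det|) ^ ((1 : ℝ) / n) / 2 := by
  obtain ⟨k, rfl⟩ : ∃ k, n = k + 1 := ⟨n - 1, by omega⟩
  rcases Nat.eq_zero_or_pos k with rfl | hk
  · refine ⟨fun _ _ => 1, by simp, fun x hx hx0 => ?_⟩
    have hint : ∃ m : ℤ, x 0 = m := by
      rw [Set.range_const, Submodule.mem_span_singleton] at hx
      obtain ⟨m, rfl⟩ := hx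
      exact ⟨m, by simp⟩
    obtain ⟨m, hm⟩ := hint
    have hm0 : m ≠ 0 := by
      rintro rfl
      apply hx0
      funext i
      rw [Fin.fin_one_eq_zero i, hm]
      simp
    have h1 : (1 : ℝ) ≤ |(m : ℝ)| := by exact_mod_cast Int.one_le_abs hm0
    have := zeta_one_re
    simp [hm]
    linarith
  · obtain ⟨p, hp, M, hM, hMp, hc⟩ := choose_p k hk
    haveI : NeZero p := ⟨hp.ne_zero⟩
    obtain ⟨u, hu⟩ := core_avg k p M hp hMp hc
    have hp0 : (0 : ℝ) < p := by exact_mod_cast hp.pos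
    refine ⟨hlBasis k p u, by rw [hlBasis_det]; positivity, fun x hx hx0 => ?_⟩
    obtain ⟨y, hy, hy'⟩ := hlBasis_mem k p u x hx
    have hy0 : y ≠ 0 := by
      rintro rfl
      exact hx0 (funext fun i => by simp [hy])
    have h1 := hu y hy' hy0
    have hsum : ∑ i, |x i| = ((∑ i, (y i).natAbs : ℕ) : ℝ) := by
      push_cast
      exact Finset.sum_congr rfl fun i _ => by rw [hy, Nat.cast_natAbs]; simp
    obtain ⟨z0, z1⟩ := zeta_bounds (k + 1) (by omega)
    rw [hM, Nat.floor_lt (by positivity)] at h1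
    rw [hsum, hlBasis_det, abs_of_pos (by positivity)]
    refine lt_of_le_of_lt ?_ h1
    gcongr
end
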